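/- Let r ≥ 3 be an integer, and let f ∈ L^r_{∞,∞} be non-constant. Set α = M_r(f) and b = M_{r−1}(f)/M_r(f), and for β ≥ 0 let g_β = α·ψ_r(β,b,0). Then α, b > 0, and for every β ≥ 0 one has M_{r−1}(g_β) = M_{r−1}(f) and M_r(g_β) = M_r(f); moreover, for every integer s with 0 ≤ s < r−1, the function β ↦ M_s(g_β) is continuous, increasing, and tends to ∞ as β → ∞. -/

import Mathlib

open MeasureTheory Filter

noncomputable section

/-- The uniform norm `‖f‖ = sup_{t ∈ ℝ} |f t|` of a function `f : ℝ → ℝ`. -/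
def unif (f : ℝ → ℝ) : ℝ := ⨆ t : ℝ, |f t|

/-- `M k f = ‖f⁽ᵏ⁾‖`, the uniform norm of the `k`-th derivative of `f`. -/
def M (k : ℕ) (f : ℝ → ℝ) : ℝ := unif (iteratedDeriv k f)

/-- The class `L^r_{∞,∞}`: bounded functions `f : ℝ → ℝ` having `r-1` (continuous)
derivatives, with `f⁽ʳ⁻¹⁾` locally absolutely continuous and `f⁽ʳ⁾` essentially bounded;
the last two conditions are equivalent to `f⁽ʳ⁻¹⁾` being Lipschitz. -/
def MemL (r : ℕ) (f : ℝ → ℝ) : Prop :=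
  Continuous f ∧ (∃ C : ℝ, ∀ t : ℝ, |f t| ≤ C) ∧ ContDiff ℝ (r - 1 : ℕ) f ∧
    ∃ K : NNReal, LipschitzWith K (iteratedDeriv (r - 1) f)

/-- The Euler perfect spline `φ_r`: the `r`-th `2π`-periodic antiderivative with zero
mean value of `t ↦ sgn (sin t)`. -/
def eulerPhi : ℕ → ℝ → ℝ
  | 0 => fun t => Real.sign (Real.sin t)
  | (s + 1) => fun t =>
      (∫ x in (0:ℝ)..t, eulerPhi s x) -
        (1 / (2 * Real.pi)) * ∫ x in (0:ℝ)..(2 * Real.pi), ∫ u in (0:ℝ)..x, eulerPhi s u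

/-- `φ_{λ,r}(t) = λ^{-r} φ_r (λ t)`. -/
def eulerPhiL (lam : ℝ) (r : ℕ) (t : ℝ) : ℝ := lam ^ (-(r : ℤ)) * eulerPhi r (lam * t)

/-- The basic step function: `0` on `[0,a]`, `1` on `(a, a+b]`, `0` after `a+b`. -/
def psiBase (a b : ℝ) (t : ℝ) : ℝ := if t ≤ a then 0 else if t ≤ a + b then 1 else 0

/-- `psiBase` continued evenly with respect to the point `a+b+c`. -/
def psiHalf (a b c t : ℝ) : ℝ :=
  if t ≤ a + b + c then psiBase a b t else psiBase a b (2 * (a + b + c) - t)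

/-- The Rodov step function `ψ_0(a,b,c)`: equal to `psiBase` on `[0, a+b+c]`, continued
evenly with respect to `a+b+c`, then oddly with respect to `2(a+b+c)`, then
`4(a+b+c)`-periodically. -/
def psiZero (a b c t : ℝ) : ℝ :=
  if (t - 4 * (a + b + c) * ⌊t / (4 * (a + b + c))⌋) ≤ 2 * (a + b + c) then
    psiHalf a b c (t - 4 * (a + b + c) * ⌊t / (4 * (a + b + c))⌋)
  else
    -psiHalf a b c (4 * (a + b + c) - (t - 4 * (a + b + c) * ⌊t / (4 * (a + b + c))⌋))

/-- `ψ_s(a,b,c)`: the `s`-th periodic antiderivative of `ψ_0(a,b,c)` with zero mean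
value over the period `[0, 4(a+b+c)]`. -/
def psi : ℕ → ℝ → ℝ → ℝ → ℝ → ℝ
  | 0 => psiZero
  | (s + 1) => fun a b c t =>
      (∫ x in (0:ℝ)..t, psi s a b c x) -
        (1 / (4 * (a + b + c))) *
          ∫ x in (0:ℝ)..(4 * (a + b + c)), ∫ u in (0:ℝ)..x, psi s a b c u

/-- The modulus of continuity `ω(D^k, X; δ) = sup {‖f⁽ᵏ⁾‖ : f ∈ X, ‖f‖ ≤ δ}` of the
differentiation operator `D^k` on a class `X`. -/
def omegaMod (k : ℕ) (X : Set (ℝ → ℝ)) (δ : ℝ) : ℝ :=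
  sSup {y : ℝ | ∃ f ∈ X, M 0 f ≤ δ ∧ M k f = y}

end

lemma exists_small_deriv (n : ℕ) : ∀ (C : ℝ) (g : ℝ → ℝ), ContDiff ℝ n g → (∀ t, |g t| ≤ C) →
    ∀ t : ℝ, ∃ ξ ∈ Set.Icc t (t + n), |iteratedDeriv n g ξ| ≤ 2 ^ n * C := by
  induction n with
  | zero =>
    intro C g _ hC t
    exact ⟨t, by simp, by simpa using hC t⟩
  | succ n ih =>
    intro C g hg hC t
    have hgn : ContDiff ℝ n g := hg.of_le (by exact_mod_cast Nat.le_succ n)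
    have hsh : ContDiff ℝ n (fun x => g (x + 1)) := hgn.comp (by fun_prop)
    have hd : ContDiff ℝ n (fun x => g (x + 1) - g x) := hsh.sub hgn
    obtain ⟨ξ, hξ, hb⟩ := ih (2 * C) (fun x => g (x + 1) - g x) hd (fun x => by
      have h1 := abs_le.1 (hC (x + 1)); have h2 := abs_le.1 (hC x)
      rw [abs_le]; constructor <;> linarith [h1.1, h1.2, h2.1, h2.2]) t
    have e : iteratedDeriv n (fun x => g (x + 1) - g x) ξ
        = iteratedDeriv n g (ξ + 1) - iteratedDeriv n g ξ := by
      rw [show (fun x => g (x + 1) - g x) = (fun x => g (x + 1)) - g from rfl,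
        iteratedDeriv_sub hsh.contDiffAt hgn.contDiffAt, iteratedDeriv_comp_add_const]
    have hdiff : Differentiable ℝ (iteratedDeriv n g) :=
      hg.differentiable_iteratedDeriv n (by exact_mod_cast Nat.lt_succ_self n)
    obtain ⟨η, hη, hη'⟩ := exists_deriv_eq_slope (iteratedDeriv n g) (show ξ < ξ + 1 by linarith)
      hdiff.continuous.continuousOn hdiff.differentiableOn
    refine ⟨η, ⟨by linarith [hξ.1, hη.1], by push_cast; linarith [hξ.2, hη.2]⟩, ?_⟩
    rw [iteratedDeriv_succ, hη', ← e, pow_succ]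
    simp only [add_sub_cancel_left, div_one]
    linarith

lemma bounded_iter (n : ℕ) (g : ℝ → ℝ) (hg : ContDiff ℝ n g) (C : ℝ) (hC : ∀ t, |g t| ≤ C)
    (K : NNReal) (hK : LipschitzWith K (iteratedDeriv n g)) :
    ∃ D, ∀ t, |iteratedDeriv n g t| ≤ D := by
  refine ⟨2 ^ n * C + K * n, fun t => ?_⟩
  obtain ⟨ξ, hξ, hb⟩ := exists_small_deriv n C g hg hC t
  have h := hK.dist_le_mul t ξ
  rw [Real.dist_eq, Real.dist_eq] at h
  have h2 : |t - ξ| ≤ n := by rw [abs_le]; constructor <;> linarith [hξ.1, hξ.2]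
  have h3 : (K : ℝ) * |t - ξ| ≤ K * n := by gcongr
  have h4 := abs_sub_abs_le_abs_sub (iteratedDeriv n g t) (iteratedDeriv n g ξ)
  linarith

lemma const_of_iter_const (n : ℕ) (g : ℝ → ℝ) (hg : ContDiff ℝ n g) (C : ℝ) (hC : ∀ t, |g t| ≤ C)
    (c : ℝ) (hc : ∀ t, iteratedDeriv n g t = c) : ∀ x y, g x = g y := by
  induction n generalizing c with
  | zero => intro x y; have h1 := hc x; have h2 := hc y; simp at h1 h2; rw [h1, h2]
  | succ n ih =>
    have hgn : ContDiff ℝ n g := hg.of_le (by exact_mod_cast Nat.le_succ n)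
    have hdiff : Differentiable ℝ (iteratedDeriv n g) :=
      hg.differentiable_iteratedDeriv n (by exact_mod_cast Nat.lt_succ_self n)
    have hc' : ∀ t, deriv (iteratedDeriv n g) t = c := by
      intro t; rw [← iteratedDeriv_succ]; exact hc t
    have hL : LipschitzWith ‖c‖₊ (iteratedDeriv n g) :=
      lipschitzWith_of_nnnorm_deriv_le hdiff (fun x => by rw [hc' x])
    obtain ⟨D, hD⟩ := bounded_iter n g hgn C hC _ hL
    have haff : ∀ t, iteratedDeriv n g t = iteratedDeriv n g 0 + c * t := by
      intro t
      have h0 : ∀ x, deriv (fun x => iteratedDeriv n g x - c * x) x = 0 := by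
        intro x
        have := (hdiff x).hasDerivAt.sub ((hasDerivAt_id x).const_mul c)
        rw [hc' x] at this
        have h2 := this.deriv
        simp only [mul_one, sub_self] at h2
        exact h2
      have := is_const_of_deriv_eq_zero (f := fun x => iteratedDeriv n g x - c * x)
        (by fun_prop) h0 t 0
      simp at this; linarith
    have hc0 : c = 0 := by
      by_contra hne
      have h1 := hD ((2 * D + 1) / c)
      rw [haff, mul_div_cancel₀ _ hne] at h1
      have h2 := abs_le.1 h1; have h3 := abs_le.1 (hD 0)
      linarith [h2.2, h3.1]
    exact ih hgn (iteratedDeriv n g 0) (fun t => by rw [haff t, hc0]; simp)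

lemma unif_pos {h : ℝ → ℝ} {D : ℝ} (hD : ∀ t, |h t| ≤ D) {x : ℝ} (hx : h x ≠ 0) : 0 < unif h := by
  have hb : BddAbove (Set.range fun t => |h t|) := ⟨D, by rintro _ ⟨t, rfl⟩; exact hD t⟩
  exact lt_of_lt_of_le (abs_pos.2 hx) (le_ciSup hb x)

lemma unif_eq {h : ℝ → ℝ} {D : ℝ} (hD : ∀ t, |h t| ≤ D) {x : ℝ} (hx : |h x| = D) : unif h = D := by
  have hb : BddAbove (Set.range fun t => |h t|) := ⟨D, by rintro _ ⟨t, rfl⟩; exact hD t⟩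
  exact le_antisymm (ciSup_le hD) (hx ▸ le_ciSup hb x)

lemma f_part (r : ℕ) (hr : 1 ≤ r) (f : ℝ → ℝ) (hf : MemL r f) (hnc : ∃ x y : ℝ, f x ≠ f y) :
    0 < M r f ∧ 0 < M (r - 1) f := by
  obtain ⟨n, rfl⟩ : ∃ n, r = n + 1 := ⟨r - 1, by omega⟩
  obtain ⟨_, ⟨C, hC⟩, hcd, K, hK⟩ := hf
  simp only [Nat.add_sub_cancel] at *
  have key : ¬ ∃ c, ∀ t, iteratedDeriv n f t = c := by
    rintro ⟨c, hc⟩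
    obtain ⟨x, y, hxy⟩ := hnc
    exact hxy (const_of_iter_const n f hcd C hC c hc x y)
  obtain ⟨D, hD⟩ := bounded_iter n f hcd C hC K hK
  constructor
  · have hb : ∀ t, |iteratedDeriv (n + 1) f t| ≤ K := by
      intro t; rw [iteratedDeriv_succ]; exact norm_deriv_le_of_lipschitz hK
    by_cases h : ∀ t, iteratedDeriv (n + 1) f t = 0
    · exfalso; apply key
      refine ⟨iteratedDeriv n f 0, fun t => ?_⟩
      have := (hK.lipschitzOnWith (s := Set.uIcc 0 t)).absolutelyContinuousOnInterval.integral_deriv_eq_sub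
      rw [← iteratedDeriv_succ] at this
      simp [h] at this
      linarith
    · push Not at h
      obtain ⟨x, hx⟩ := h
      exact unif_pos hb hx
  · by_cases h : ∀ t, iteratedDeriv n f t = 0
    · exact absurd ⟨0, h⟩ key
    · push Not at h
      obtain ⟨x, hx⟩ := h
      exact unif_pos hD hx

lemma pz_periodic (a b : ℝ) (hP : 0 < a + b) (t : ℝ) :
    psiZero a b 0 (t + 4 * (a + b)) = psiZero a b 0 t := by
  have h4 : 4 * (a + b) ≠ 0 := by positivity
  have e : (t + 4 * (a + b)) / (4 * (a + b)) = t / (4 * (a + b)) + 1 := by field_simp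
  have e2 : t + 4 * (a + b) - 4 * (a + b) * ((⌊t / (4 * (a + b)) + 1⌋ : ℤ) : ℝ)
     = t - 4 * (a + b) * ((⌊t / (4 * (a + b))⌋ : ℤ) : ℝ) := by
    rw [Int.floor_add_one]; push_cast; ring
  unfold psiZero
  simp only [add_zero]
  rw [e, e2]

lemma pz_base (a b : ℝ) (hP : 0 < a + b) (t : ℝ) (h0 : 0 ≤ t) (h1 : t < 4 * (a + b)) :
    psiZero a b 0 t = if t ≤ 2 * (a + b) then psiHalf a b 0 t else
      - psiHalf a b 0 (4 * (a + b) - t) := by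
  have : ⌊t / (4 * (a + b))⌋ = 0 := by
    rw [Int.floor_eq_zero_iff]
    exact ⟨by positivity, by rw [div_lt_one (by positivity)]; exact h1⟩
  unfold psiZero
  simp [this]

lemma pz_reduce (a b : ℝ) (hP : 0 < a + b) (Q : ℝ → Prop)
    (hper : ∀ t, Q (t + 4 * (a + b)) ↔ Q t)
    (hQ : ∀ t, 0 ≤ t → t < 4 * (a + b) → Q t) (t : ℝ) : Q t := by
  have hz : ∀ (n : ℤ) t, Q (t + n * (4 * (a + b))) ↔ Q t := by
    intro n
    induction n using Int.induction_on with
    | zero => simp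
    | succ i ih =>
      intro t
      rw [← ih t, ← hper (t + ((i : ℤ) : ℝ) * (4 * (a + b)))]; push_cast; ring_nf
    | pred i ih =>
      intro t; rw [← ih t, ← hper (t + _)]; push_cast; ring_nf
  obtain ⟨n, hn, -⟩ := existsUnique_add_zsmul_mem_Ico (show 0 < 4 * (a + b) by positivity) t 0
  rw [← hz n t]
  simp only [zsmul_eq_mul, zero_add, Set.mem_Ico] at hn
  exact hQ _ hn.1 hn.2

lemma half_symm (a b t : ℝ) : psiHalf a b 0 (2 * (a + b) - t) = psiHalf a b 0 t := by
  unfold psiHalf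
  simp only [add_zero, sub_sub_cancel]
  split_ifs with h1 h2 h2
  · have : t = a + b := by linarith
    rw [this]; ring_nf
  · rfl
  · rfl
  · exfalso; linarith

lemma half_zero (a b : ℝ) (ha : 0 ≤ a) (hb : 0 < b) : psiHalf a b 0 0 = 0 := by
  unfold psiHalf psiBase
  simp [ha, (by linarith : 0 ≤ a + b)]

lemma pz_odd (a b : ℝ) (ha : 0 ≤ a) (hb : 0 < b) (t : ℝ) :
    psiZero a b 0 (-t) = - psiZero a b 0 t := by
  have hP : 0 < a + b := by linarith
  refine pz_reduce a b hP (fun t => psiZero a b 0 (-t) = - psiZero a b 0 t) ?_ ?_ t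
  · intro t
    rw [pz_periodic a b hP, ← pz_periodic a b hP (-(t + 4 * (a + b)))]
    ring_nf
  · intro t h0 h1
    rcases h0.eq_or_lt with rfl | h0'
    · rw [neg_zero, pz_base a b hP 0 le_rfl (by positivity)]
      simp [half_zero a b ha hb, hP.le]
    · rw [← pz_periodic a b hP, pz_base a b hP t h0 h1,
        pz_base a b hP _ (by linarith) (by linarith)]
      split_ifs with h2 h3 h3
      · have : t = 2 * (a + b) := by linarith
        have e1 := half_symm a b 0
        rw [half_zero a b ha hb, sub_zero] at e1
        rw [this, e1, show -(2 * (a + b)) + 4 * (a + b) = 2 * (a + b) by ring, e1]; simp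
      · rw [neg_neg]; ring_nf
      · ring_nf
      · exfalso; linarith

lemma pz_even (a b : ℝ) (ha : 0 ≤ a) (hb : 0 < b) (t : ℝ) :
    psiZero a b 0 (2 * (a + b) - t) = psiZero a b 0 t := by
  have hP : 0 < a + b := by linarith
  refine pz_reduce a b hP (fun t => psiZero a b 0 (2 * (a + b) - t) = psiZero a b 0 t) ?_ ?_ t
  · intro t
    rw [pz_periodic a b hP, ← pz_periodic a b hP (2 * (a + b) - (t + 4 * (a + b)))]
    ring_nf
  · intro t h0 h1
    by_cases h : t ≤ 2 * (a + b)
    · rw [pz_base a b hP t h0 h1, pz_base a b hP _ (by linarith) (by linarith), if_pos h,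
        if_pos (by linarith), half_symm]
    · rw [← pz_periodic a b hP, pz_base a b hP t h0 h1, if_neg h,
        pz_base a b hP _ (by linarith) (by linarith), if_neg (by linarith), ← half_symm]
      ring_nf

lemma pz_quarter (a b : ℝ) (ha : 0 ≤ a) (hb : 0 < b) (t : ℝ) (h0 : 0 ≤ t) (h1 : t ≤ a + b) :
    psiZero a b 0 t = if t ≤ a then 0 else 1 := by
  rw [pz_base a b (by linarith) t h0 (by linarith), if_pos (by linarith)]
  unfold psiHalf psiBase
  simp [h1]

lemma pz_meas (a b : ℝ) : Measurable (psiZero a b 0) := by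
  have h1 : Measurable (psiBase a b) := by
    unfold psiBase
    exact Measurable.ite measurableSet_Iic measurable_const
      (Measurable.ite measurableSet_Iic measurable_const measurable_const)
  have h2 : Measurable (psiHalf a b 0) := by
    unfold psiHalf
    exact Measurable.ite measurableSet_Iic h1 (h1.comp (by fun_prop))
  have h3 : Measurable (fun t : ℝ => t - 4 * (a + b + 0) * ((⌊t / (4 * (a + b + 0))⌋ : ℤ) : ℝ)) := by
    have : Measurable (fun t : ℝ => ((⌊t / (4 * (a + b + 0))⌋ : ℤ) : ℝ)) := by
      have hh : Measurable (fun t : ℝ => ⌊t / (4 * (a + b + 0))⌋) :=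
        Int.measurable_floor.comp (by fun_prop)
      exact measurable_from_top.comp hh
    fun_prop
  unfold psiZero
  exact Measurable.ite (measurableSet_le h3 measurable_const) (h2.comp h3)
    (h2.comp (measurable_const.sub h3)).neg

lemma pz_le (a b t : ℝ) : |psiZero a b 0 t| ≤ 1 := by
  unfold psiZero psiHalf psiBase
  split_ifs <;> simp

/-- auxiliary symmetric functions -/
noncomputable def wv (a b : ℝ) : ℕ → ℝ → ℝ
  | 0 => psiZero a b 0
  | (n + 1) => fun x => ∫ t in (0:ℝ)..x, wv a b n (a + b - t)

lemma wv_zero_int (a b x y : ℝ) : IntervalIntegrable (wv a b 0) volume x y := by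
  rw [intervalIntegrable_iff]
  refine MeasureTheory.Measure.integrableOn_of_bounded (M := 1) ?_ (pz_meas a b).aestronglyMeasurable ?_
  · simp [Set.uIoc]
  · exact Filter.Eventually.of_forall (fun t => pz_le a b t)

lemma comp_sub_int {g : ℝ → ℝ} (hg : ∀ x y, IntervalIntegrable g volume x y) (P x y : ℝ) :
    IntervalIntegrable (fun t => g (P - t)) volume x y := by
  have := (hg (P - x) (P - y)).comp_sub_left P
  simpa using this

lemma wv_int (a b : ℝ) (n : ℕ) : ∀ x y, IntervalIntegrable (wv a b n) volume x y := by
  induction n with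
  | zero => exact wv_zero_int a b
  | succ n ih =>
    intro x y
    have : Continuous (wv a b (n + 1)) :=
      intervalIntegral.continuous_primitive (comp_sub_int ih (a + b)) 0
    exact this.intervalIntegrable _ _

lemma wv_cont (a b : ℝ) (n : ℕ) : Continuous (wv a b (n + 1)) :=
  intervalIntegral.continuous_primitive (comp_sub_int (wv_int a b n) (a + b)) 0

lemma wv_symm (a b : ℝ) (ha : 0 ≤ a) (hb : 0 < b) (n : ℕ) :
    (∀ x, wv a b n (-x) = - wv a b n x) ∧ (∀ x, wv a b n (2 * (a + b) - x) = wv a b n x) := by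
  induction n with
  | zero => exact ⟨pz_odd a b ha hb, pz_even a b ha hb⟩
  | succ n ih =>
    obtain ⟨ho, he⟩ := ih
    constructor
    · intro x
      show ∫ t in (0:ℝ)..(-x), wv a b n (a + b - t) = - ∫ t in (0:ℝ)..x, wv a b n (a + b - t)
      have h1 := intervalIntegral.integral_comp_neg (a := 0) (b := x)
        (fun t => wv a b n (a + b - t))
      simp only [neg_zero] at h1
      rw [intervalIntegral.integral_symm, ← h1]
      congr 1
      apply intervalIntegral.integral_congr
      intro t _
      show wv a b n (a + b - -t) = wv a b n (a + b - t)
      rw [← he]; ring_nf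
    · intro x
      show ∫ t in (0:ℝ)..(2 * (a + b) - x), wv a b n (a + b - t)
        = ∫ t in (0:ℝ)..x, wv a b n (a + b - t)
      have hi := comp_sub_int (wv_int a b n) (a + b)
      have h1 := intervalIntegral.integral_add_adjacent_intervals (hi 0 x) (hi x (2 * (a + b) - x))
      rw [← h1]
      have h2 := intervalIntegral.integral_comp_sub_left (a := x) (b := 2 * (a + b) - x)
        (fun t => wv a b n (a + b - t)) (2 * (a + b))
      simp only [sub_sub_cancel] at h2
      have h3 : ∫ t in x..(2 * (a + b) - x), wv a b n (a + b - (2 * (a + b) - t))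
          = - ∫ t in x..(2 * (a + b) - x), wv a b n (a + b - t) := by
        rw [← intervalIntegral.integral_neg]
        apply intervalIntegral.integral_congr
        intro t _
        show wv a b n (a + b - (2 * (a + b) - t)) = - wv a b n (a + b - t)
        rw [← ho]; ring_nf
      rw [h3] at h2
      linarith

lemma wv_anti (a b : ℝ) (ha : 0 ≤ a) (hb : 0 < b) (n : ℕ) (x : ℝ) :
    wv a b n (x + 2 * (a + b)) = - wv a b n x := by
  obtain ⟨ho, he⟩ := wv_symm a b ha hb n
  rw [← ho, ← he (-x)]; ring_nf

lemma mean_zero {g : ℝ → ℝ} (hg : ∀ x y, IntervalIntegrable g volume x y) (P : ℝ)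
    (h : ∀ x, g (x + 2 * P) = - g x) : ∫ x in (0:ℝ)..(4 * P), g x = 0 := by
  rw [← intervalIntegral.integral_add_adjacent_intervals (hg 0 (2 * P)) (hg (2 * P) (4 * P))]
  have h1 := intervalIntegral.integral_comp_add_right (a := 0) (b := 2 * P) g (2 * P)
  rw [show 0 + 2 * P = 2 * P by ring, show 2 * P + 2 * P = 4 * P by ring] at h1
  rw [← h1]
  simp [h]

lemma psi_eq_wv (a b : ℝ) (ha : 0 ≤ a) (hb : 0 < b) (n : ℕ) :
    ∃ ε : ℝ, |ε| = 1 ∧ (psi n a b 0 = (fun t => ε * wv a b n t) ∨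
      psi n a b 0 = (fun t => ε * wv a b n (a + b - t))) := by
  have hP : a + b ≠ 0 := by linarith
  induction n with
  | zero => exact ⟨1, by simp, Or.inl (by simp [psi, wv])⟩
  | succ n ih =>
    obtain ⟨ε, hε, h⟩ := ih
    rcases h with h | h
    · refine ⟨-ε, by simpa using hε, Or.inr ?_⟩
      have e1 : ∀ t, ∫ x in (0:ℝ)..t, psi n a b 0 x
          = ε * (wv a b (n + 1) (a + b) - wv a b (n + 1) (a + b - t)) := by
        intro t
        rw [h, intervalIntegral.integral_const_mul]
        congr 1
        show _ = (∫ t in (0:ℝ)..(a + b), wv a b n (a + b - t))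
          - ∫ t in (0:ℝ)..(a + b - t), wv a b n (a + b - t)
        have hi := comp_sub_int (wv_int a b n) (a + b)
        rw [intervalIntegral.integral_interval_sub_left (hi _ _) (hi _ _),
          intervalIntegral.integral_comp_sub_left]
        simp
      have hc : Continuous (fun x => wv a b (n + 1) (a + b - x)) :=
        (wv_cont a b n).comp (by fun_prop)
      have e2 : ∫ x in (0:ℝ)..(4 * (a + b)), wv a b (n + 1) (a + b - x) = 0 := by
        apply mean_zero (fun x y => hc.intervalIntegrable _ _)
        intro x
        have := wv_anti a b ha hb (n + 1) (a + b - (x + 2 * (a + b)))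
        rw [show a + b - (x + 2 * (a + b)) + 2 * (a + b) = a + b - x by ring] at this
        linarith
      funext t
      simp only [psi, add_zero, e1]
      rw [intervalIntegral.integral_const_mul, intervalIntegral.integral_sub
        (by simp) (hc.intervalIntegrable _ _), e2]
      simp
      field_simp
      ring
    · refine ⟨ε, hε, Or.inl ?_⟩
      have e1 : ∀ t, ∫ x in (0:ℝ)..t, psi n a b 0 x = ε * wv a b (n + 1) t := by
        intro t
        rw [h, intervalIntegral.integral_const_mul]
        rfl
      have e2 := mean_zero (fun x y => (wv_cont a b n).intervalIntegrable x y) (a + b)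
        (wv_anti a b ha hb (n + 1))
      funext t
      simp only [psi, add_zero, e1]
      rw [intervalIntegral.integral_const_mul, e2]
      simp

lemma psi_int (a b : ℝ) (ha : 0 ≤ a) (hb : 0 < b) (n : ℕ) (x y : ℝ) :
    IntervalIntegrable (psi n a b 0) volume x y := by
  obtain ⟨ε, -, h | h⟩ := psi_eq_wv a b ha hb n
  · rw [h]; exact (wv_int a b n x y).const_mul ε
  · rw [h]; exact (comp_sub_int (wv_int a b n) (a + b) x y).const_mul ε

lemma psi_cont (a b : ℝ) (ha : 0 ≤ a) (hb : 0 < b) (n : ℕ) : Continuous (psi (n + 1) a b 0) := by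
  have := intervalIntegral.continuous_primitive (psi_int a b ha hb n) 0
  simp only [psi]
  exact this.sub continuous_const

lemma psi_hasDeriv (a b : ℝ) (ha : 0 ≤ a) (hb : 0 < b) (n : ℕ) (t : ℝ)
    (hc : ContinuousAt (psi n a b 0) t) (hm : StronglyMeasurableAtFilter (psi n a b 0) (nhds t)) :
    HasDerivAt (psi (n + 1) a b 0) (psi n a b 0 t) t := by
  have := intervalIntegral.integral_hasDerivAt_right (psi_int a b ha hb n 0 t) hm hc
  simp only [psi]
  exact this.sub_const _

lemma iter_psi (a b α : ℝ) (ha : 0 ≤ a) (hb : 0 < b) (r s : ℕ) (hs : s < r) :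
    iteratedDeriv s (fun t => α * psi r a b 0 t) = fun t => α * psi (r - s) a b 0 t := by
  induction s with
  | zero => simp
  | succ s ih =>
    rw [iteratedDeriv_succ, ih (by omega)]
    obtain ⟨k, hk⟩ : ∃ k, r - (s + 1) = k + 1 := ⟨r - (s + 1) - 1, by omega⟩
    rw [hk, show r - s = k + 1 + 1 by omega]
    funext t
    have hc := psi_cont a b ha hb k
    exact ((psi_hasDeriv a b ha hb (k + 1) t hc.continuousAt
      (hc.stronglyMeasurableAtFilter _ _)).const_mul α).deriv

/-- quarter-wave profile -/
noncomputable def uv (b : ℝ) : ℕ → ℝ → ℝ → ℝ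
  | 0 => fun x _ => min x b
  | (n + 1) => fun x P => ∫ t in (0:ℝ)..x, uv b n (P - t) P

lemma uv_cont (b : ℝ) (n : ℕ) : Continuous (fun p : ℝ × ℝ => uv b n p.1 p.2) := by
  induction n with
  | zero => simp only [uv]; fun_prop
  | succ n ih =>
    simp only [uv]
    refine intervalIntegral.continuous_parametric_intervalIntegral_of_continuous
      (f := fun (p : ℝ × ℝ) t => uv b n (p.2 - t) p.2) ?_ continuous_fst
    exact ih.comp (show Continuous (fun q : (ℝ × ℝ) × ℝ => (q.1.2 - q.2, q.1.2)) by fun_prop)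

lemma uv_cont1 (b : ℝ) (n : ℕ) (P : ℝ) : Continuous (fun x => uv b n x P) :=
  (uv_cont b n).comp (show Continuous (fun x : ℝ => (x, P)) by fun_prop)

lemma uv_cont2 (b : ℝ) (n : ℕ) (P : ℝ) : Continuous (fun x => uv b n (P - x) P) :=
  (uv_cont1 b n P).comp (show Continuous (fun x : ℝ => P - x) by fun_prop)

lemma wv_eq_uv (a b : ℝ) (ha : 0 ≤ a) (hb : 0 < b) (n : ℕ) : ∀ x, 0 ≤ x → x ≤ a + b →
    wv a b (n + 1) x = uv b n x (a + b) := by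
  induction n with
  | zero =>
    intro x h0 h1
    show ∫ t in (0:ℝ)..x, psiZero a b 0 (a + b - t) = min x b
    have key : ∀ y, 0 ≤ y → y ≤ b → ∫ t in (0:ℝ)..y, psiZero a b 0 (a + b - t) = y := by
      intro y hy0 hyb
      have : ∫ t in (0:ℝ)..y, psiZero a b 0 (a + b - t) = ∫ t in (0:ℝ)..y, (1:ℝ) := by
        apply intervalIntegral.integral_congr_Ioo_of_le hy0
        intro t ht
        show psiZero a b 0 (a + b - t) = 1
        rw [pz_quarter a b ha hb _ (by linarith [ht.2]) (by linarith [ht.1]),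
          if_neg (by linarith [ht.2])]
      rw [this]; simp
    by_cases hx : x ≤ b
    · rw [min_eq_left hx, key x h0 hx]
    · push Not at hx
      rw [min_eq_right hx.le]
      have hi := comp_sub_int (wv_int a b 0) (a + b)
      have hadd := intervalIntegral.integral_add_adjacent_intervals (hi 0 b) (hi b x)
      simp only [wv] at hadd
      rw [← hadd, key b hb.le le_rfl]
      have : ∫ t in b..x, psiZero a b 0 (a + b - t) = ∫ t in b..x, (0:ℝ) := by
        apply intervalIntegral.integral_congr_Ioo_of_le hx.le
        intro t ht
        show psiZero a b 0 (a + b - t) = 0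
        rw [pz_quarter a b ha hb _ (by linarith [ht.2]) (by linarith [ht.1]),
          if_pos (by linarith [ht.1])]
      rw [this]; simp
  | succ n ih =>
    intro x h0 h1
    show ∫ t in (0:ℝ)..x, wv a b (n + 1) (a + b - t) = ∫ t in (0:ℝ)..x, uv b n (a + b - t) (a + b)
    apply intervalIntegral.integral_congr_Ioo_of_le h0
    intro t ht
    exact ih _ (by linarith [ht.2]) (by linarith [ht.1])

lemma uv_pos (b : ℝ) (hb : 0 < b) (n : ℕ) (P : ℝ) : ∀ x, 0 < x → x ≤ P → 0 < uv b n x P := by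
  induction n with
  | zero => intro x h0 _; exact lt_min h0 hb
  | succ n ih =>
    intro x h0 h1
    refine intervalIntegral.intervalIntegral_pos_of_pos_on
      ((uv_cont2 b n P).intervalIntegrable _ _) ?_ h0
    intro t ht
    exact ih _ (by linarith [ht.2]) (by linarith [ht.1])

lemma uv_zero (b : ℝ) (hb : 0 < b) (n : ℕ) (P : ℝ) : uv b n 0 P = 0 := by
  cases n with
  | zero => simp [uv, hb.le]
  | succ n => simp [uv]

lemma uv_nonneg (b : ℝ) (hb : 0 < b) (n : ℕ) (P : ℝ) (x : ℝ) (h0 : 0 ≤ x) (h1 : x ≤ P) :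
    0 ≤ uv b n x P := by
  rcases h0.eq_or_lt with rfl | h
  · rw [uv_zero b hb]
  · exact (uv_pos b hb n P x h h1).le

lemma uv_mono (b : ℝ) (hb : 0 < b) (n : ℕ) (P x y : ℝ) (h0 : 0 ≤ x) (hxy : x ≤ y) (h1 : y ≤ P) :
    uv b n x P ≤ uv b n y P := by
  cases n with
  | zero => exact min_le_min_right b hxy
  | succ n =>
    show ∫ t in (0:ℝ)..x, uv b n (P - t) P ≤ ∫ t in (0:ℝ)..y, uv b n (P - t) P
    have hi := fun u v => (uv_cont2 b n P).intervalIntegrable (μ := volume) u v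
    rw [← intervalIntegral.integral_add_adjacent_intervals (hi 0 x) (hi x y)]
    have : 0 ≤ ∫ t in x..y, uv b n (P - t) P := by
      apply intervalIntegral.integral_nonneg hxy
      intro t ht
      exact uv_nonneg b hb n P _ (by linarith [ht.2]) (by linarith [ht.1])
    linarith

lemma uv_monoP (b : ℝ) (hb : 0 < b) (n : ℕ) (P P' : ℝ) (hP : P ≤ P') :
    ∀ x, 0 ≤ x → x ≤ P → uv b n x P ≤ uv b n x P' := by
  induction n with
  | zero => intro x _ _; exact le_rfl
  | succ n ih =>
    intro x h0 h1
    refine intervalIntegral.integral_mono_on h0 ((uv_cont2 b n P).intervalIntegrable _ _)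
      ((uv_cont2 b n P').intervalIntegrable _ _) ?_
    intro t ht
    exact (ih _ (by linarith [ht.2]) (by linarith [ht.1])).trans
      (uv_mono b hb n P' _ _ (by linarith [ht.2]) (by linarith) (by linarith [ht.1]))

lemma uv_diag (b : ℝ) (n : ℕ) (P : ℝ) : uv b (n + 1) P P = ∫ t in (0:ℝ)..P, uv b n t P := by
  show ∫ t in (0:ℝ)..P, uv b n (P - t) P = _
  rw [intervalIntegral.integral_comp_sub_left (fun t => uv b n t P)]
  simp

lemma uv_strict (b : ℝ) (hb : 0 < b) (n : ℕ) (P P' : ℝ) (h0 : 0 < P) (hP : P < P') :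
    uv b (n + 1) P P < uv b (n + 1) P' P' := by
  rw [uv_diag, uv_diag]
  have hi := fun Q u v => (uv_cont1 b n Q).intervalIntegrable (μ := volume) u v
  rw [← intervalIntegral.integral_add_adjacent_intervals (hi P' 0 P) (hi P' P P')]
  have h1 : ∫ t in (0:ℝ)..P, uv b n t P ≤ ∫ t in (0:ℝ)..P, uv b n t P' :=
    intervalIntegral.integral_mono_on h0.le (hi _ _ _) (hi _ _ _)
      (fun t ht => uv_monoP b hb n P P' hP.le t ht.1 ht.2)
  have h2 : 0 < ∫ t in P..P', uv b n t P' :=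
    intervalIntegral.intervalIntegral_pos_of_pos_on (hi _ _ _)
      (fun t ht => uv_pos b hb n P' t (by linarith [ht.1]) ht.2.le) hP
  linarith

lemma uv_lower (b : ℝ) (hb : 0 < b) (n : ℕ) (P : ℝ) (hP : b ≤ P) :
    (P - b) * uv b n b b ≤ uv b (n + 1) P P := by
  rw [uv_diag]
  have hi := fun Q u v => (uv_cont1 b n Q).intervalIntegrable (μ := volume) u v
  rw [← intervalIntegral.integral_add_adjacent_intervals (hi P 0 b) (hi P b P)]
  have h1 : 0 ≤ ∫ t in (0:ℝ)..b, uv b n t P :=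
    intervalIntegral.integral_nonneg hb.le
      (fun t ht => uv_nonneg b hb n P t ht.1 (ht.2.trans hP))
  have h2 : ∫ t in b..P, uv b n b b ≤ ∫ t in b..P, uv b n t P :=
    intervalIntegral.integral_mono_on hP (by simp) (hi _ _ _)
      (fun t ht => (uv_monoP b hb n b P hP b hb.le le_rfl).trans
        (uv_mono b hb n P b t hb.le ht.1 ht.2))
  rw [intervalIntegral.integral_const, smul_eq_mul] at h2
  linarith

lemma wv_le (a b : ℝ) (ha : 0 ≤ a) (hb : 0 < b) (n : ℕ) (x : ℝ) :
    |wv a b (n + 1) x| ≤ uv b n (a + b) (a + b) := by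
  have hP : 0 < a + b := by linarith
  obtain ⟨ho, he⟩ := wv_symm a b ha hb (n + 1)
  have hq : ∀ x, 0 ≤ x → x ≤ a + b → |wv a b (n + 1) x| ≤ uv b n (a + b) (a + b) := by
    intro x h0 h1
    rw [wv_eq_uv a b ha hb n x h0 h1, abs_of_nonneg (uv_nonneg b hb n _ x h0 h1)]
    exact uv_mono b hb n _ _ _ h0 h1 le_rfl
  have hh : ∀ x, 0 ≤ x → x ≤ 2 * (a + b) → |wv a b (n + 1) x| ≤ uv b n (a + b) (a + b) := by
    intro x h0 h1
    by_cases h : x ≤ a + b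
    · exact hq x h0 h
    · rw [← he]; exact hq _ (by linarith) (by linarith)
  refine pz_reduce a b hP (fun x => |wv a b (n + 1) x| ≤ uv b n (a + b) (a + b)) ?_ ?_ x
  · intro t
    rw [show t + 4 * (a + b) = t + 2 * (a + b) + 2 * (a + b) by ring, wv_anti a b ha hb,
      wv_anti a b ha hb, neg_neg]
  · intro t h0 h1
    by_cases h : t ≤ 2 * (a + b)
    · exact hh t h0 h
    · have := wv_anti a b ha hb (n + 1) (t - 2 * (a + b))
      rw [sub_add_cancel] at this
      rw [this, abs_neg]
      exact hh _ (by linarith) (by linarith)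

lemma unif_psi (a b α : ℝ) (ha : 0 ≤ a) (hb : 0 < b) (hα : 0 < α) (n : ℕ) :
    unif (fun t => α * psi (n + 1) a b 0 t) = α * uv b n (a + b) (a + b) := by
  have hP : 0 < a + b := by linarith
  have hN := uv_nonneg b hb n (a + b) (a + b) hP.le le_rfl
  have hw := wv_eq_uv a b ha hb n (a + b) hP.le le_rfl
  obtain ⟨ε, hε, h | h⟩ := psi_eq_wv a b ha hb (n + 1)
  · refine unif_eq (x := a + b) (fun t => ?_) ?_
    · rw [h, abs_mul, abs_mul, hε, one_mul, abs_of_pos hα]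
      exact mul_le_mul_of_nonneg_left (wv_le a b ha hb n t) hα.le
    · rw [h, abs_mul, abs_mul, hε, one_mul, abs_of_pos hα, hw, abs_of_nonneg hN]
  · refine unif_eq (x := 0) (fun t => ?_) ?_
    · rw [h, abs_mul, abs_mul, hε, one_mul, abs_of_pos hα]
      exact mul_le_mul_of_nonneg_left (wv_le a b ha hb n _) hα.le
    · rw [h, abs_mul, abs_mul, hε, one_mul, abs_of_pos hα, sub_zero, hw, abs_of_nonneg hN]

lemma M_psi (a b α : ℝ) (ha : 0 ≤ a) (hb : 0 < b) (hα : 0 < α) (r s n : ℕ) (h : r = s + (n + 1)) :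
    M s (fun t => α * psi r a b 0 t) = α * uv b n (a + b) (a + b) := by
  unfold M
  rw [iter_psi a b α ha hb r s (by omega), show r - s = n + 1 by omega]
  exact unif_psi a b α ha hb hα n

lemma psi_one_deriv_mid (a b : ℝ) (ha : 0 ≤ a) (hb : 0 < b) :
    HasDerivAt (psi 1 a b 0) 1 (a + b) := by
  have hone : ∀ t, a < t → t < a + 2 * b → psiZero a b 0 t = 1 := by
    intro t h1 h2
    by_cases h : t ≤ a + b
    · rw [pz_quarter a b ha hb t (by linarith) h, if_neg (by linarith)]
    · rw [← pz_even a b ha hb, pz_quarter a b ha hb _ (by linarith) (by linarith),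
        if_neg (by linarith)]
  have hev : psi 0 a b 0 =ᶠ[nhds (a + b)] fun _ => (1:ℝ) := by
    filter_upwards [Ioo_mem_nhds (show a < a + b by linarith) (show a + b < a + 2 * b by linarith)]
      with t ht
    exact hone t ht.1 ht.2
  have := psi_hasDeriv a b ha hb 0 (a + b) (continuousAt_const.congr hev.symm)
    (pz_meas a b).aestronglyMeasurable.stronglyMeasurableAtFilter
  rwa [hev.eq_of_nhds] at this

lemma psi_one_lip (a b : ℝ) (ha : 0 ≤ a) (hb : 0 < b) : LipschitzWith 1 (psi 1 a b 0) := by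
  apply LipschitzWith.of_dist_le_mul
  intro x y
  simp only [psi, Real.dist_eq, sub_sub_sub_cancel_right]
  have hi : ∀ x y, IntervalIntegrable (psiZero a b 0) volume x y := psi_int a b ha hb 0
  rw [intervalIntegral.integral_interval_sub_left (hi _ _) (hi _ _)]
  have := intervalIntegral.norm_integral_le_of_norm_le_const (a := y) (b := x) (C := 1)
    (f := psiZero a b 0) (fun t _ => pz_le a b t)
  simpa using this

lemma M_psi_top (a b α : ℝ) (ha : 0 ≤ a) (hb : 0 < b) (hα : 0 < α) (r : ℕ) (hr : 1 ≤ r) :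
    M r (fun t => α * psi r a b 0 t) = α := by
  obtain ⟨n, rfl⟩ : ∃ n, r = n + 1 := ⟨r - 1, by omega⟩
  unfold M
  rw [iteratedDeriv_succ, iter_psi a b α ha hb (n + 1) n (by omega), Nat.add_sub_cancel_left]
  refine unif_eq (x := a + b) (fun t => ?_) ?_
  · rw [deriv_const_mul_field, abs_mul, abs_of_pos hα]
    have := norm_deriv_le_of_lipschitz (psi_one_lip a b ha hb) (x₀ := t)
    rw [Real.norm_eq_abs, NNReal.coe_one] at this
    nlinarith
  · rw [((psi_one_deriv_mid a b ha hb).const_mul α).deriv, mul_one, abs_of_pos hα]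


/-- The one-parameter spline family for `𝐤 = (0,k,r-1,r)`: for non-constant
`f ∈ L^r_{∞,∞}`, the splines `g_β = α ψ_r(β,b,0)` with `α = M_r(f)` and
`b = M_{r-1}(f)/M_r(f)` match `M_{r-1}` and `M_r` of `f`, while for each
`s < r-1` the map `β ↦ M_s(g_β)` continuously increases to `∞`. -/
theorem stmt13 (r : ℕ) (hr : 3 ≤ r) (f : ℝ → ℝ) (hf : MemL r f)
    (hnc : ∃ x y : ℝ, f x ≠ f y)
    (α b : ℝ) (hα : α = M r f) (hb : b = M (r - 1) f / M r f)
    (g : ℝ → ℝ → ℝ) (hg : g = fun β t => α * psi r β b 0 t) :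
    0 < α ∧ 0 < b ∧
    (∀ β : ℝ, 0 ≤ β → M (r - 1) (g β) = M (r - 1) f ∧ M r (g β) = M r f) ∧
    (∀ s : ℕ, s < r - 1 →
      ContinuousOn (fun β => M s (g β)) (Set.Ici 0) ∧
      StrictMonoOn (fun β => M s (g β)) (Set.Ici 0) ∧
      Filter.Tendsto (fun β => M s (g β)) Filter.atTop Filter.atTop) := by
  have hr1 : 1 ≤ r := by omega
  obtain ⟨hMr, hMr1⟩ := f_part r hr1 f hf hnc
  have hα0 : 0 < α := hα ▸ hMr
  have hb0 : 0 < b := by rw [hb]; positivity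
  have hab : α * b = M (r - 1) f := by rw [hα, hb]; field_simp
  subst hg
  refine ⟨hα0, hb0, ?_, ?_⟩
  · intro β hβ
    constructor
    · show M (r - 1) (fun t => α * psi r β b 0 t) = _
      rw [M_psi β b α hβ hb0 hα0 r (r - 1) 0 (by omega), ← hab]
      show α * min (β + b) b = α * b
      rw [min_eq_right (by linarith)]
    · show M r (fun t => α * psi r β b 0 t) = _
      rw [M_psi_top β b α hβ hb0 hα0 r hr1, hα]
  · intro s hs
    obtain ⟨n, hn⟩ : ∃ n, r = s + (n + 1 + 1) := ⟨r - s - 2, by omega⟩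
    have hM : ∀ β : ℝ, 0 ≤ β → M s (fun t => α * psi r β b 0 t)
        = α * uv b (n + 1) (β + b) (β + b) :=
      fun β hβ => M_psi β b α hβ hb0 hα0 r s (n + 1) hn
    refine ⟨?_, ?_, ?_⟩
    · have hc : Continuous (fun β : ℝ => α * uv b (n + 1) (β + b) (β + b)) :=
        continuous_const.mul ((uv_cont b (n + 1)).comp
          (show Continuous (fun β : ℝ => (β + b, β + b)) by fun_prop))
      exact hc.continuousOn.congr (fun β hβ => hM β hβ)
    · intro x hx y hy hxy
      have hx' : (0:ℝ) ≤ x := hx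
      show M s (fun t => α * psi r x b 0 t) < M s (fun t => α * psi r y b 0 t)
      rw [hM x hx, hM y hy]
      exact mul_lt_mul_of_pos_left
        (uv_strict b hb0 n _ _ (by linarith) (by linarith)) hα0
    · have hN : 0 < uv b n b b := uv_pos b hb0 n b b hb0 le_rfl
      have hlin : Filter.Tendsto (fun β : ℝ => β * (α * uv b n b b)) Filter.atTop Filter.atTop :=
        Filter.tendsto_id.atTop_mul_const (by positivity)
      refine Filter.tendsto_atTop_mono' _ ?_ hlin
      filter_upwards [Filter.eventually_ge_atTop (0:ℝ)] with β hβ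
      show _ ≤ M s (fun t => α * psi r β b 0 t)
      rw [hM β hβ]
      have := uv_lower b hb0 n (β + b) (by linarith)
      rw [add_sub_cancel_right] at this
      nlinarith
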